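/- (Dual version of Lemma 2.) Suppose L is symmetric (Lᵀ = L) and L · P_π = P_π · L_π, where L_π ∈ ℝ^{(s·d)×(s·d)} has d×d blocks (L_π)_{ij}. Suppose there exist Q₁* ∈ ℝ^{q×q} with Aᵀ·C = C·Q₁* and matrices Q*_{ij} ∈ ℝ^{q×q} (i, j ∈ Fin s) with (L_π)_{ij}·Kᵀ·Bᵀ·C = C·Q*_{ij} for all i, j. Let Q* ∈ ℝ^{(s·q)×(s·q)} be the block matrix whose (i,j) block is (if i = j then Q₁* else 0) − Q*_{ij}. Then L̃ᵀ · P̃ = P̃ · Q*, where L̃ᵀ = blockDiag_n(Aᵀ) − Lᵀ·blockDiag_n(Kᵀ·Bᵀ) is the transpose of L̃ = blockDiag_n(A) − blockDiag_n(B·K)·L; consequently the column space of P̃ is invariant under the linear map x ↦ L̃ᵀ.mulVec x. -/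

import Mathlib

open Matrix

/-- Characteristic matrix of a partition `c : Fin n → Fin s`. -/
noncomputable def charM (n s d : ℕ) (c : Fin n → Fin s) :
    Matrix (Fin n × Fin d) (Fin s × Fin d) ℝ :=
  fun ia jb => if c ia.1 = jb.1 ∧ ia.2 = jb.2 then 1 else 0

/-- Block diagonal matrix with `n` copies of `X` on the diagonal. -/
noncomputable def bdiag (n : ℕ) {d q : ℕ} (X : Matrix (Fin d) (Fin q) ℝ) :
    Matrix (Fin n × Fin d) (Fin n × Fin q) ℝ :=
  fun ia jb => if ia.1 = jb.1 then X ia.2 jb.2 else 0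

/-- The `(i,j)` block of a block matrix. -/
noncomputable def blockOf {n s d e : ℕ} (L : Matrix (Fin n × Fin d) (Fin s × Fin e) ℝ)
    (i : Fin n) (j : Fin s) : Matrix (Fin d) (Fin e) ℝ :=
  fun a b => L (i, a) (j, b)

theorem bdiag_mul_bdiag_aux (n : ℕ) {d e f : ℕ} (X : Matrix (Fin d) (Fin e) ℝ)
    (Y : Matrix (Fin e) (Fin f) ℝ) : bdiag n X * bdiag n Y = bdiag n (X * Y) := by
  ext ⟨i, a⟩ ⟨j, b⟩
  simp only [Matrix.mul_apply, bdiag, Fintype.sum_prod_type]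
  rw [Finset.sum_eq_single i]
  · by_cases h : i = j <;> simp [h]
  · intro k _ hk
    simp [Ne.symm hk]
  · simp

theorem bdiag_transpose_aux (n : ℕ) {d e : ℕ} (X : Matrix (Fin d) (Fin e) ℝ) :
    (bdiag n X)ᵀ = bdiag n Xᵀ := by
  ext ⟨i, a⟩ ⟨j, b⟩
  simp [bdiag, eq_comm]

theorem charM_mul_aux {n s d : ℕ} {ι : Type*} (c : Fin n → Fin s)
    (M : Matrix (Fin s × Fin d) ι ℝ) (i : Fin n) (a : Fin d) (j : ι) :
    (charM n s d c * M) (i, a) j = M (c i, a) j := by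
  simp only [Matrix.mul_apply, charM]
  rw [Finset.sum_eq_single (c i, a)]
  · simp
  · rintro ⟨k, b⟩ _ hk
    have : ¬ (c i = k ∧ a = b) := by
      rintro ⟨rfl, rfl⟩
      exact hk rfl
    simp [this]
  · simp

theorem bdiag_mul_charM_aux {n s d : ℕ} (c : Fin n → Fin s) (X : Matrix (Fin d) (Fin d) ℝ) :
    bdiag n X * charM n s d c = charM n s d c * bdiag s X := by
  ext ⟨i, a⟩ ⟨j, b⟩
  rw [charM_mul_aux]
  simp only [Matrix.mul_apply, bdiag, charM]
  rw [Finset.sum_eq_single (i, b)]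
  · simp
  · rintro ⟨k, e⟩ _ hk
    by_cases h : i = k
    · subst h
      have : e ≠ b := by
        rintro rfl
        exact hk rfl
      simp [this]
    · simp [h]
  · simp

theorem blockOf_mul_bdiag_aux {n s d e f : ℕ} (M : Matrix (Fin n × Fin d) (Fin s × Fin e) ℝ)
    (X : Matrix (Fin e) (Fin f) ℝ) (i : Fin n) (j : Fin s) :
    blockOf (M * bdiag s X) i j = blockOf M i j * X := by
  ext a b
  simp only [blockOf, Matrix.mul_apply, bdiag, Fintype.sum_prod_type]
  rw [Finset.sum_eq_single j]
  · simp
  · intro k _ hk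
    simp [hk]
  · simp

theorem blockOf_bdiag_mul_aux {n s d e f : ℕ} (X : Matrix (Fin d) (Fin e) ℝ)
    (M : Matrix (Fin n × Fin e) (Fin s × Fin f) ℝ) (i : Fin n) (j : Fin s) :
    blockOf (bdiag n X * M) i j = X * blockOf M i j := by
  ext a b
  simp only [blockOf, Matrix.mul_apply, bdiag, Fintype.sum_prod_type]
  rw [Finset.sum_eq_single i]
  · simp
  · intro k _ hk
    simp [Ne.symm hk]
  · simp

/-- Lemma 5 (dual version of Lemma 2): if `L` is symmetric, `L P_π = P_π L_π`,
`Aᵀ C = C Q₁*` and `(L_π)_{ij} Kᵀ Bᵀ C = C Q*_{ij}`, then `L̃ᵀ P̃ = P̃ Q*` and the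
column space of `P̃` is `L̃ᵀ`-invariant. -/
theorem lemma5_dual_intertwining {n s d p q : ℕ}
    (c : Fin n → Fin s) (hc : Function.Surjective c)
    (A : Matrix (Fin d) (Fin d) ℝ) (B : Matrix (Fin d) (Fin p) ℝ)
    (K : Matrix (Fin p) (Fin d) ℝ) (C : Matrix (Fin d) (Fin q) ℝ)
    (L : Matrix (Fin n × Fin d) (Fin n × Fin d) ℝ)
    (hLsym : Lᵀ = L)
    (Lπ : Matrix (Fin s × Fin d) (Fin s × Fin d) ℝ)
    (hLP : L * charM n s d c = charM n s d c * Lπ)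
    (Q₁s : Matrix (Fin q) (Fin q) ℝ)
    (hQ₁s : Aᵀ * C = C * Q₁s)
    (Qs : Fin s → Fin s → Matrix (Fin q) (Fin q) ℝ)
    (hQs : ∀ i j, blockOf Lπ i j * Kᵀ * Bᵀ * C = C * Qs i j)
    (Qstar : Matrix (Fin s × Fin q) (Fin s × Fin q) ℝ)
    (hQstar : ∀ (i j : Fin s) (a b : Fin q),
      Qstar (i, a) (j, b) = ((if i = j then Q₁s else 0) - Qs i j) a b) :
    (bdiag n A - bdiag n (B * K) * L)ᵀ * (charM n s d c * bdiag s C)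
        = (charM n s d c * bdiag s C) * Qstar ∧
      Submodule.map (bdiag n A - bdiag n (B * K) * L)ᵀ.mulVecLin
          (LinearMap.range (charM n s d c * bdiag s C).mulVecLin)
        ≤ LinearMap.range (charM n s d c * bdiag s C).mulVecLin := by
  have key : (bdiag n A - bdiag n (B * K) * L)ᵀ * (charM n s d c * bdiag s C)
      = (charM n s d c * bdiag s C) * Qstar := by
    have h1 : bdiag s (Aᵀ * C) - Lπ * bdiag s (Kᵀ * Bᵀ * C) = bdiag s C * Qstar := by
      have hb : ∀ i j, blockOf (bdiag s (Aᵀ * C) - Lπ * bdiag s (Kᵀ * Bᵀ * C)) i j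
          = blockOf (bdiag s C * Qstar) i j := by
        intro i j
        have e1 : blockOf (bdiag s (Aᵀ * C) - Lπ * bdiag s (Kᵀ * Bᵀ * C)) i j
            = blockOf (bdiag s (Aᵀ * C)) i j - blockOf (Lπ * bdiag s (Kᵀ * Bᵀ * C)) i j := rfl
        have e2 : blockOf Qstar i j = (if i = j then Q₁s else 0) - Qs i j := by
          ext a b
          exact hQstar i j a b
        have e3 : blockOf (bdiag s (Aᵀ * C)) i j = if i = j then Aᵀ * C else 0 := by
          ext a b
          by_cases h : i = j <;> simp [blockOf, bdiag, h]
        rw [e1, blockOf_bdiag_mul_aux, blockOf_mul_bdiag_aux, e2, e3, Matrix.mul_sub, ← hQs, hQ₁s]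
        simp only [Matrix.mul_assoc]
        by_cases h : i = j <;> simp [h]
      ext ⟨i, a⟩ ⟨j, b⟩
      exact congrFun (congrFun (hb i j) a) b
    rw [Matrix.mul_assoc, ← h1, Matrix.transpose_sub, Matrix.transpose_mul, hLsym,
      bdiag_transpose_aux, bdiag_transpose_aux, Matrix.transpose_mul, ← Matrix.mul_assoc,
      Matrix.sub_mul, Matrix.mul_assoc L, bdiag_mul_charM_aux, bdiag_mul_charM_aux,
      ← Matrix.mul_assoc L, hLP, Matrix.sub_mul, Matrix.mul_sub]
    simp only [Matrix.mul_assoc, bdiag_mul_bdiag_aux]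
  refine ⟨key, ?_⟩
  rintro _ ⟨_, ⟨x, rfl⟩, rfl⟩
  refine ⟨Qstar *ᵥ x, ?_⟩
  simp only [Matrix.mulVecLin_apply, Matrix.mulVec_mulVec]
  rw [key]
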